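/- Let 0 < ε < 1, let N ≥ 2 be a natural number, and let p be a natural number with p ≥ 12·ln N / (ε²·(1.5 − ε)). Then for every natural number d and every family of N points y₁, …, y_N in ℝ^d there exists a map f : ℝ^d → ℝ^p such that for all indices i, j one has (1 − ε)·‖y_i − y_j‖² ≤ ‖f(y_i) − f(y_j)‖² ≤ (1 + ε)·‖y_i − y_j‖². -/

import Mathlib

/-!
Project along independent standard Gaussian vectors `g₁, …, g_p`: the variables `⟪g_k, x⟫` are
independent with law `N(0, ‖x‖²)`, so `∑ ⟪g_k, x⟫² / ‖x‖²` is a chi-squared variable with `p`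
degrees of freedom. Chernoff's bound with the optimal parameter makes either relative deviation
`±ε` of this sum from its mean `p` have probability at most `exp (-p ε² (3/2 - ε) / 6)`, which the
condition on `p` makes at most `N⁻²`. There are `N (N - 1) / 2` differences of points and two
deviations for each, so the union bound leaves a choice of the `g_k` for which none of them occurs.
-/

open MeasureTheory ProbabilityTheory Finset
open scoped NNReal RealInnerProductSpace

lemma log_one_add_le_cubic {x : ℝ} (hx : 0 ≤ x) :
    Real.log (1 + x) ≤ x - x ^ 2 / 2 + x ^ 3 / 3 := by
  have hderiv {t : ℝ} (ht : 0 ≤ t) : HasDerivAt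
      (fun t ↦ t - t ^ 2 / 2 + t ^ 3 / 3 - Real.log (1 + t)) (t ^ 3 / (1 + t)) t := by
    have hpos : 1 + t ≠ 0 := by positivity
    convert! (((hasDerivAt_id' t).sub ((hasDerivAt_pow 2 t).div_const 2)).add
      ((hasDerivAt_pow 3 t).div_const 3)).sub (((hasDerivAt_id' t).const_add 1).log hpos) using 1
    push_cast
    field_simp
    ring
  have hmono : MonotoneOn (fun t ↦ t - t ^ 2 / 2 + t ^ 3 / 3 - Real.log (1 + t)) (Set.Ici 0) := by
    refine monotoneOn_of_hasDerivWithinAt_nonneg (f' := fun t ↦ t ^ 3 / (1 + t)) (convex_Ici 0)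
      (fun t ht ↦ (hderiv ht).continuousAt.continuousWithinAt)
      (fun t ht ↦ (hderiv (interior_subset ht)).hasDerivWithinAt) fun t ht ↦ ?_
    have : 0 ≤ t := interior_subset ht
    positivity
  simpa using hmono Set.self_mem_Ici hx hx

lemma log_one_sub_le_quadratic {x : ℝ} (hx : 0 ≤ x) (hx1 : x < 1) :
    Real.log (1 - x) ≤ -x - x ^ 2 / 2 := by
  have hpartial : x + x ^ 2 / 2 ≤ -Real.log (1 - x) := by
    simpa [sum_range_succ, one_add_one_eq_two] using
      sum_le_hasSum (range 2) (fun n _ ↦ by positivity)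
        (Real.hasSum_pow_div_log_of_abs_lt_one (abs_lt.2 ⟨by linarith, hx1⟩))
  linarith

lemma mgf_sq_gaussianReal {v : ℝ≥0} {s : ℝ} (hs : 2 * s * v < 1) :
    mgf (fun x ↦ x ^ 2) (gaussianReal 0 v) s = (√(1 - 2 * s * v))⁻¹ := by
  rcases eq_or_ne v 0 with rfl | hv
  · simp [mgf]
  have : (0 : ℝ) < v := by positivity
  have hs0 : 0 < 1 - 2 * s * v := by linarith
  have hdensity (x : ℝ) : gaussianPDFReal 0 v x • Real.exp (s * x ^ 2) =
      (√(2 * Real.pi * v))⁻¹ * Real.exp (-((1 - 2 * s * v) / (2 * v)) * x ^ 2) := by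
    rw [gaussianPDFReal, smul_eq_mul, mul_assoc, ← Real.exp_add]
    congr 2
    field_simp
    ring
  have hscale : Real.pi / ((1 - 2 * s * v) / (2 * v)) =
      2 * Real.pi * v * (1 - 2 * s * v)⁻¹ := by
    field_simp
  simp_rw [mgf, integral_gaussianReal_eq_integral_smul hv, hdensity]
  rw [integral_const_mul, integral_gaussian, hscale,
    Real.sqrt_mul (x := 2 * Real.pi * v) (by positivity), Real.sqrt_inv,
    inv_mul_cancel_left₀ (by positivity)]

section ChiSquared

variable {Ω κ : Type*} [MeasurableSpace Ω] [Fintype κ] {μ : Measure Ω} {X : κ → Ω → ℝ} {v : ℝ≥0}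

lemma mgf_sum_sq_of_hasLaw_gaussianReal (hX : iIndepFun X μ)
    (hlaw : ∀ k, HasLaw (X k) (gaussianReal 0 v) μ) {s : ℝ} (hs : 2 * s * v < 1) :
    mgf (fun ω ↦ ∑ k, X k ω ^ 2) μ s = (√(1 - 2 * s * v))⁻¹ ^ Fintype.card κ := by
  have hsq : iIndepFun (fun k ω ↦ X k ω ^ 2) μ := hX.comp (fun _ x ↦ x ^ 2) (by fun_prop)
  have hmgf (k : κ) : mgf (fun ω ↦ X k ω ^ 2) μ s = (√(1 - 2 * s * v))⁻¹ := by
    rw [← mgf_sq_gaussianReal hs, ← (hlaw k).map_eq,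
      mgf_map (hlaw k).aemeasurable (by fun_prop)]
    rfl
  have hmeas (k : κ) : AEMeasurable (fun ω ↦ X k ω ^ 2) μ := (hlaw k).aemeasurable.pow_const 2
  have hsum := hsq.mgf_sum₀ (t := s) hmeas univ
  simp only [hmgf, prod_const, card_univ] at hsum
  rw [← hsum]
  congr 1
  ext ω
  simp

lemma integrable_exp_mul_sum_sq_of_hasLaw_gaussianReal (hX : iIndepFun X μ)
    (hlaw : ∀ k, HasLaw (X k) (gaussianReal 0 v) μ) {s : ℝ} (hs : 2 * s * v < 1) :
    Integrable (fun ω ↦ Real.exp (s * ∑ k, X k ω ^ 2)) μ := by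
  have : 0 < √(1 - 2 * s * v) := Real.sqrt_pos.2 (by linarith)
  refine Integrable.of_integral_ne_zero ?_
  rw [← mgf, mgf_sum_sq_of_hasLaw_gaussianReal hX hlaw hs]
  positivity

/-- The exponent minimizing Chernoff's bound for `∑ X k ^ 2` at `1 + δ` times its mean, where the
`X k` are independent centred Gaussian variables of variance `v`. -/
noncomputable def chernoffParam (v : ℝ≥0) (δ : ℝ) : ℝ := δ / (2 * (1 + δ) * v)

lemma one_sub_two_mul_chernoffParam_mul (hv : v ≠ 0) {δ : ℝ} (hδ : -1 < δ) :
    1 - 2 * chernoffParam v δ * v = (1 + δ)⁻¹ := by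
  have hδ0 : 1 + δ ≠ 0 := by linarith
  rw [chernoffParam]
  field_simp
  ring

lemma two_mul_chernoffParam_mul_lt_one (hv : v ≠ 0) {δ : ℝ} (hδ : -1 < δ) :
    2 * chernoffParam v δ * v < 1 := by
  have hpos : 0 < (1 + δ)⁻¹ := inv_pos.2 (by linarith)
  linarith [one_sub_two_mul_chernoffParam_mul hv hδ]

lemma exp_mul_mgf_sum_sq_chernoffParam (hv : v ≠ 0) (hX : iIndepFun X μ)
    (hlaw : ∀ k, HasLaw (X k) (gaussianReal 0 v) μ) {δ : ℝ} (hδ : -1 < δ) :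
    Real.exp (-chernoffParam v δ * ((1 + δ) * (Fintype.card κ * v))) *
        mgf (fun ω ↦ ∑ k, X k ω ^ 2) μ (chernoffParam v δ) =
      Real.exp (Fintype.card κ * ((Real.log (1 + δ) - δ) / 2)) := by
  have hδ0 : 0 < 1 + δ := by linarith
  have hsqrt : √(1 + δ) = Real.exp (Real.log (1 + δ) / 2) := by
    rw [Real.exp_half, Real.exp_log hδ0]
  have hexponent : -chernoffParam v δ * ((1 + δ) * (Fintype.card κ * v)) =
      Fintype.card κ * (-δ / 2) := by
    rw [chernoffParam]
    field_simp
  rw [mgf_sum_sq_of_hasLaw_gaussianReal hX hlaw (two_mul_chernoffParam_mul_lt_one hv hδ),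
    one_sub_two_mul_chernoffParam_mul hv hδ, Real.sqrt_inv, inv_inv, hsqrt, ← Real.exp_nat_mul,
    hexponent, ← Real.exp_add]
  ring_nf

lemma measureReal_le_sum_sq_le (hv : v ≠ 0) (hX : iIndepFun X μ)
    (hlaw : ∀ k, HasLaw (X k) (gaussianReal 0 v) μ) {δ : ℝ} (hδ : 0 ≤ δ) :
    μ.real {ω | (1 + δ) * (Fintype.card κ * v) ≤ ∑ k, X k ω ^ 2} ≤
      Real.exp (Fintype.card κ * ((Real.log (1 + δ) - δ) / 2)) := by
  have := hX.isProbabilityMeasure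
  have hδ1 : -1 < δ := by linarith
  have hparam : 0 ≤ chernoffParam v δ := by rw [chernoffParam]; positivity
  rw [← exp_mul_mgf_sum_sq_chernoffParam hv hX hlaw hδ1]
  exact measure_ge_le_exp_mul_mgf _ hparam (integrable_exp_mul_sum_sq_of_hasLaw_gaussianReal hX hlaw
    (two_mul_chernoffParam_mul_lt_one hv hδ1))

lemma measureReal_sum_sq_le_le (hv : v ≠ 0) (hX : iIndepFun X μ)
    (hlaw : ∀ k, HasLaw (X k) (gaussianReal 0 v) μ) {δ : ℝ} (hδ : δ ≤ 0) (hδ1 : -1 < δ) :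
    μ.real {ω | ∑ k, X k ω ^ 2 ≤ (1 + δ) * (Fintype.card κ * v)} ≤
      Real.exp (Fintype.card κ * ((Real.log (1 + δ) - δ) / 2)) := by
  have := hX.isProbabilityMeasure
  have hδ0 : 0 ≤ 1 + δ := by linarith
  have hparam : chernoffParam v δ ≤ 0 := div_nonpos_of_nonpos_of_nonneg hδ (by positivity)
  rw [← exp_mul_mgf_sum_sq_chernoffParam hv hX hlaw hδ1]
  exact measure_le_le_exp_mul_mgf _ hparam (integrable_exp_mul_sum_sq_of_hasLaw_gaussianReal hX hlaw
    (two_mul_chernoffParam_mul_lt_one hv hδ1))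

lemma measureReal_lt_sum_sq_le_exp (hv : v ≠ 0) (hX : iIndepFun X μ)
    (hlaw : ∀ k, HasLaw (X k) (gaussianReal 0 v) μ) {ε : ℝ} (hε : 0 ≤ ε) :
    μ.real {ω | (1 + ε) * (Fintype.card κ * v) < ∑ k, X k ω ^ 2} ≤
      Real.exp (-(Fintype.card κ * (ε ^ 2 * (3 / 2 - ε)) / 6)) := by
  have := hX.isProbabilityMeasure
  calc μ.real {ω | (1 + ε) * (Fintype.card κ * v) < ∑ k, X k ω ^ 2}
      ≤ μ.real {ω | (1 + ε) * (Fintype.card κ * v) ≤ ∑ k, X k ω ^ 2} :=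
        measureReal_mono <| Set.ofPred_subset_ofPred.2 fun _ h ↦ h.le
    _ ≤ Real.exp (Fintype.card κ * ((Real.log (1 + ε) - ε) / 2)) :=
        measureReal_le_sum_sq_le hv hX hlaw hε
    _ ≤ Real.exp (Fintype.card κ * (-(ε ^ 2 * (3 / 2 - ε)) / 6)) := by
        gcongr Real.exp (_ * ?_)
        linarith [log_one_add_le_cubic hε]
    _ = Real.exp (-(Fintype.card κ * (ε ^ 2 * (3 / 2 - ε)) / 6)) := by ring_nf

lemma measureReal_sum_sq_lt_le_exp (hv : v ≠ 0) (hX : iIndepFun X μ)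
    (hlaw : ∀ k, HasLaw (X k) (gaussianReal 0 v) μ) {ε : ℝ} (hε : 0 ≤ ε) :
    μ.real {ω | ∑ k, X k ω ^ 2 < (1 - ε) * (Fintype.card κ * v)} ≤
      Real.exp (-(Fintype.card κ * (ε ^ 2 * (3 / 2 - ε)) / 6)) := by
  have := hX.isProbabilityMeasure
  rcases le_or_gt 1 ε with hε1 | hε1
  · have hempty : {ω | ∑ k, X k ω ^ 2 < (1 - ε) * (Fintype.card κ * v)} = ∅ := by
      refine Set.eq_empty_of_forall_notMem fun ω ↦ mt Set.mem_ofPred.1 (not_lt.2 ?_)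
      exact (mul_nonpos_of_nonpos_of_nonneg (by linarith) (by positivity)).trans (by positivity)
    rw [hempty, measureReal_empty]
    positivity
  calc μ.real {ω | ∑ k, X k ω ^ 2 < (1 - ε) * (Fintype.card κ * v)}
      ≤ μ.real {ω | ∑ k, X k ω ^ 2 ≤ (1 + -ε) * (Fintype.card κ * v)} :=
        measureReal_mono <| Set.ofPred_subset_ofPred.2 fun _ h ↦ h.le
    _ ≤ Real.exp (Fintype.card κ * ((Real.log (1 - ε) - -ε) / 2)) :=
        measureReal_sum_sq_le_le hv hX hlaw (by linarith) (by linarith)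
    _ ≤ Real.exp (Fintype.card κ * (-(ε ^ 2 * (3 / 2 - ε)) / 6)) := by
        gcongr Real.exp (_ * ?_)
        linarith [log_one_sub_le_quadratic hε hε1, pow_nonneg hε 3]
    _ = Real.exp (-(Fintype.card κ * (ε ^ 2 * (3 / 2 - ε)) / 6)) := by ring_nf

lemma measureReal_lt_abs_sum_sq_sub_le (hv : v ≠ 0) (hX : iIndepFun X μ)
    (hlaw : ∀ k, HasLaw (X k) (gaussianReal 0 v) μ) {ε : ℝ} (hε : 0 ≤ ε) :
    μ.real {ω | ε * (Fintype.card κ * v) < |∑ k, X k ω ^ 2 - Fintype.card κ * v|} ≤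
      2 * Real.exp (-(Fintype.card κ * (ε ^ 2 * (3 / 2 - ε)) / 6)) := by
  have := hX.isProbabilityMeasure
  calc μ.real {ω | ε * (Fintype.card κ * v) < |∑ k, X k ω ^ 2 - Fintype.card κ * v|}
      ≤ μ.real ({ω | (1 + ε) * (Fintype.card κ * v) < ∑ k, X k ω ^ 2} ∪
          {ω | ∑ k, X k ω ^ 2 < (1 - ε) * (Fintype.card κ * v)}) := by
        refine measureReal_mono fun ω hω ↦ ?_
        rcases lt_abs.1 (Set.mem_ofPred.1 hω) with h | h
        · exact Or.inl (Set.mem_ofPred.2 (by linarith))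
        · exact Or.inr (Set.mem_ofPred.2 (by linarith))
    _ ≤ _ := measureReal_union_le _ _
    _ ≤ 2 * Real.exp (-(Fintype.card κ * (ε ^ 2 * (3 / 2 - ε)) / 6)) := by
        linarith [measureReal_lt_sum_sq_le_exp hv hX hlaw hε,
          measureReal_sum_sq_lt_le_exp hv hX hlaw hε]

end ChiSquared

section RowMap

variable {E κ : Type*} [NormedAddCommGroup E] [InnerProductSpace ℝ E] [Fintype κ]

/-- The linear map `x ↦ (⟪g k, x⟫ / √|κ|)ₖ`. For independent standard Gaussian rows `g k` the
normalization makes it preserve squared norms in expectation. -/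
noncomputable def rowMap (g : κ → E) : E →L[ℝ] EuclideanSpace ℝ κ :=
  (√(Fintype.card κ))⁻¹ • (EuclideanSpace.equiv κ ℝ).symm.toContinuousLinearMap ∘L
    ContinuousLinearMap.pi fun k ↦ innerSL ℝ (g k)

lemma norm_sq_rowMap (g : κ → E) (x : E) :
    ‖rowMap g x‖ ^ 2 = (∑ k, ⟪g k, x⟫ ^ 2) / Fintype.card κ := by
  simp [rowMap, EuclideanSpace.norm_sq_eq, norm_smul, mul_pow, div_eq_inv_mul]

variable [FiniteDimensional ℝ E] [MeasurableSpace E] [BorelSpace E]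

lemma hasLaw_inner_stdGaussian (x : E) :
    HasLaw (fun g ↦ ⟪g, x⟫) (gaussianReal 0 (‖x‖₊ ^ 2)) (stdGaussian E) where
  map_eq := by
    have hinner : (fun g ↦ ⟪g, x⟫) = innerSL ℝ x := by
      ext g
      rw [innerSL_apply_apply, real_inner_comm]
    rw [hinner, IsGaussian.map_eq_gaussianReal, integral_strongDual_stdGaussian,
      variance_dual_stdGaussian, innerSL_apply_norm, Real.toNNReal_pow (norm_nonneg x),
      norm_toNNReal]

lemma measureReal_lt_abs_norm_sq_rowMap_sub_le [Nonempty κ] {ε : ℝ} (hε : 0 ≤ ε) (x : E) :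
    (Measure.pi fun _ : κ ↦ stdGaussian E).real {g | ε * ‖x‖ ^ 2 < |‖rowMap g x‖ ^ 2 - ‖x‖ ^ 2|} ≤
      2 * Real.exp (-(Fintype.card κ * (ε ^ 2 * (3 / 2 - ε)) / 6)) := by
  rcases eq_or_ne x 0 with rfl | hx
  · simp [Real.exp_nonneg]
  have hcard : (0 : ℝ) < Fintype.card κ := by positivity
  have hindep : iIndepFun (fun (k : κ) (g : κ → E) ↦ ⟪g k, x⟫)
      (Measure.pi fun _ ↦ stdGaussian E) :=
    iIndepFun_pi fun _ ↦ (hasLaw_inner_stdGaussian x).aemeasurable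
  have hlaw (k : κ) : HasLaw (fun g : κ → E ↦ ⟪g k, x⟫) (gaussianReal 0 (‖x‖₊ ^ 2))
      (Measure.pi fun _ ↦ stdGaussian E) :=
    (hasLaw_inner_stdGaussian x).comp
      (measurePreserving_eval (fun _ : κ ↦ stdGaussian E) k).hasLaw
  have hscale (g : κ → E) : |∑ k, ⟪g k, x⟫ ^ 2 - Fintype.card κ * ‖x‖ ^ 2| =
      Fintype.card κ * |‖rowMap g x‖ ^ 2 - ‖x‖ ^ 2| := by
    rw [← abs_of_pos hcard, ← abs_mul, abs_of_pos hcard, norm_sq_rowMap]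
    field_simp
  have hbound := measureReal_lt_abs_sum_sq_sub_le (by simpa using hx) hindep hlaw hε
  simpa only [NNReal.coe_pow, coe_nnnorm, hscale, mul_left_comm ε, mul_lt_mul_iff_right₀ hcard]
    using hbound

end RowMap

lemma exists_forall_notMem_of_sum_measureReal_lt_one {Ω τ : Type*} [MeasurableSpace Ω] [Fintype τ]
    {μ : Measure Ω} [IsProbabilityMeasure μ] {s : τ → Set Ω} (hs : ∑ t, μ.real (s t) < 1) :
    ∃ ω, ∀ t, ω ∉ s t := by
  by_contra! hcover
  have hunion : ⋃ t, s t = Set.univ := Set.eq_univ_of_forall fun ω ↦ Set.mem_iUnion.2 (hcover ω)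
  have hle := measureReal_iUnion_fintype_le (μ := μ) s
  rw [hunion, probReal_univ] at hle
  exact hs.not_ge hle

section Embedding

variable {E κ τ : Type*} [NormedAddCommGroup E] [InnerProductSpace ℝ E] [Fintype κ] [Fintype τ]

lemma exists_forall_abs_norm_sq_sub_le_of_finiteDimensional [FiniteDimensional ℝ E] {ε : ℝ}
    (hε : 0 ≤ ε) (x : τ → E)
    (hκ : Fintype.card τ * (2 * Real.exp (-(Fintype.card κ * (ε ^ 2 * (3 / 2 - ε)) / 6))) < 1) :
    ∃ L : E →L[ℝ] EuclideanSpace ℝ κ, ∀ t, |‖L (x t)‖ ^ 2 - ‖x t‖ ^ 2| ≤ ε * ‖x t‖ ^ 2 := by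
  borelize E
  rcases isEmpty_or_nonempty τ with hτ | hτ
  · exact ⟨0, hτ.elim⟩
  have hcard : (1 : ℝ) ≤ Fintype.card τ := by exact_mod_cast Fintype.card_pos
  have : Nonempty κ := by
    by_contra hempty
    rw [not_nonempty_iff] at hempty
    simp only [Fintype.card_eq_zero, Nat.cast_zero, zero_mul, zero_div, neg_zero, Real.exp_zero,
      mul_one] at hκ
    linarith
  obtain ⟨g, hg⟩ := exists_forall_notMem_of_sum_measureReal_lt_one
    (μ := Measure.pi fun _ : κ ↦ stdGaussian E)
    (s := fun t ↦ {g | ε * ‖x t‖ ^ 2 < |‖rowMap g (x t)‖ ^ 2 - ‖x t‖ ^ 2|}) <| by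
      refine (sum_le_sum fun t _ ↦ measureReal_lt_abs_norm_sq_rowMap_sub_le hε (x t)).trans_lt ?_
      rwa [sum_const, card_univ, nsmul_eq_mul]
  exact ⟨rowMap g, fun t ↦ not_lt.1 (hg t)⟩

lemma exists_forall_abs_norm_sq_sub_le {ε : ℝ} (hε : 0 ≤ ε) (x : τ → E)
    (hκ : Fintype.card τ * (2 * Real.exp (-(Fintype.card κ * (ε ^ 2 * (3 / 2 - ε)) / 6))) < 1) :
    ∃ L : E →L[ℝ] EuclideanSpace ℝ κ, ∀ t, |‖L (x t)‖ ^ 2 - ‖x t‖ ^ 2| ≤ ε * ‖x t‖ ^ 2 := by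
  let V := Submodule.span ℝ (Set.range x)
  have : FiniteDimensional ℝ V := FiniteDimensional.span_of_finite ℝ (Set.finite_range x)
  let z (t : τ) : V := ⟨x t, Submodule.subset_span (Set.mem_range_self t)⟩
  obtain ⟨L, hL⟩ := exists_forall_abs_norm_sq_sub_le_of_finiteDimensional hε z hκ
  refine ⟨L ∘L V.orthogonalProjectionOnto, fun t ↦ ?_⟩
  have hproj : V.orthogonalProjectionOnto (x t) = z t :=
    V.orthogonalProjectionOnto_mem_subspace_eq_self (z t)
  rw [ContinuousLinearMap.comp_apply, hproj]
  exact hL t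

end Embedding

lemma card_sigma_fin_mul_two (N : ℕ) :
    Fintype.card (Σ j : Fin N, Fin j) * 2 = N * (N - 1) := by
  simp only [Fintype.card_sigma, Fintype.card_fin]
  rw [Fin.sum_univ_eq_sum_range (fun j ↦ j), sum_range_id_mul_two]

lemma card_sigma_fin_mul_two_mul_exp_lt_one {N : ℕ} {a : ℝ} (ha : 2 * Real.log N ≤ a) :
    Fintype.card (Σ j : Fin N, Fin j) * (2 * Real.exp (-a)) < 1 := by
  rcases N.eq_zero_or_pos with rfl | hN
  · simp
  have : (0 : ℝ) < N := by exact_mod_cast hN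
  have hcard : (Fintype.card (Σ j : Fin N, Fin j) : ℝ) * 2 < N ^ 2 := by
    rw [sq]
    exact_mod_cast (card_sigma_fin_mul_two N).trans_lt
      (Nat.mul_lt_mul_of_pos_left (Nat.sub_lt hN one_pos) hN)
  have hexp : (N : ℝ) ^ 2 ≤ Real.exp a := by
    rwa [← Real.log_le_iff_le_exp (by positivity), Real.log_pow, Nat.cast_ofNat]
  rw [← mul_assoc, Real.exp_neg, ← div_eq_mul_inv, div_lt_one (Real.exp_pos a)]
  exact hcard.trans_le hexp

theorem stmt0_general {E κ : Type*} [NormedAddCommGroup E] [InnerProductSpace ℝ E] [Fintype κ]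
    {ε : ℝ} (hε : 0 ≤ ε) {N : ℕ}
    (hκ : 12 * Real.log N ≤ Fintype.card κ * (ε ^ 2 * (3 / 2 - ε))) (y : Fin N → E) :
    ∃ L : E →L[ℝ] EuclideanSpace ℝ κ, ∀ i j,
      (1 - ε) * ‖y i - y j‖ ^ 2 ≤ ‖L (y i) - L (y j)‖ ^ 2 ∧
      ‖L (y i) - L (y j)‖ ^ 2 ≤ (1 + ε) * ‖y i - y j‖ ^ 2 := by
  obtain ⟨L, hL⟩ := exists_forall_abs_norm_sq_sub_le (κ := κ) hε
    (fun q : Σ j : Fin N, Fin j ↦ y q.1 - y (q.2.castLE q.1.is_le'))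
    (card_sigma_fin_mul_two_mul_exp_lt_one (by linarith))
  refine ⟨L, fun i j ↦ ?_⟩
  wlog hji : j ≤ i generalizing i j
  · rw [norm_sub_rev, norm_sub_rev (L _)]
    exact this j i (le_of_not_ge hji)
  rcases hji.eq_or_lt with rfl | hji
  · simp
  have hdist : |‖L (y i - y j)‖ ^ 2 - ‖y i - y j‖ ^ 2| ≤ ε * ‖y i - y j‖ ^ 2 := hL ⟨i, j, hji⟩
  rw [map_sub, abs_le] at hdist
  constructor <;> linarith

/-- **Johnson–Lindenstrauss lemma.** If `0 < ε < 1`, `N ≥ 2` and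
`p ≥ 12 ln N / (ε² (1.5 − ε))`, then any `N` points in `ℝ^d` admit a map
into `ℝ^p` distorting squared pairwise distances by at most `1 ± ε`. -/
theorem stmt0 (ε : ℝ) (hε0 : 0 < ε) (hε1 : ε < 1) (N : ℕ) (hN : 2 ≤ N)
    (p : ℕ) (hp : (p : ℝ) ≥ 12 * Real.log N / (ε ^ 2 * (1.5 - ε)))
    (d : ℕ) (y : Fin N → EuclideanSpace ℝ (Fin d)) :
    ∃ f : EuclideanSpace ℝ (Fin d) → EuclideanSpace ℝ (Fin p),
      ∀ i j : Fin N,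
        (1 - ε) * ‖y i - y j‖ ^ 2 ≤ ‖f (y i) - f (y j)‖ ^ 2 ∧
        ‖f (y i) - f (y j)‖ ^ 2 ≤ (1 + ε) * ‖y i - y j‖ ^ 2 := by
  have hp' := (div_le_iff₀ (mul_pos (pow_pos hε0 2) (by linarith))).1 hp
  obtain ⟨L, hL⟩ := stmt0_general (κ := Fin p) hε0.le (by rw [Fintype.card_fin]; linarith) y
  exact ⟨L, hL⟩
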